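/- For every α with 0<α<1 and every β>0 there exists a constant M > 0 such that |E_{α,β}(−x)| ≤ M/(1+x) for all x ≥ 0. -/

import Mathlib

open Set Filter

/-- The two-parameter Mittag-Leffler function `E_{α,β}(z) = ∑_{k≥0} z^k/Γ(αk+β)`. -/
noncomputable def ml (α β z : ℝ) : ℝ := ∑' k : ℕ, z ^ k / Real.Gamma (α * k + β)

/-!
The function `g(t) = E_{α,α}(-t^α)` satisfies
`Γ(α) g(t) + ∫₀ᵗ s^(α-1) (1 - s/t)^(α-1) g(s) ds = 1`, whose kernel decreases in `t` as `α ≤ 1`.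
If `g` had a first zero `t₀`, comparing the equation at `t₀` with the one at a maximum point of `g`
on `[t₁, t₀]` would bound `Γ(α)` by the mass of the kernel on `[t₁, t₀]`, which tends to `0` as
`t₁ → t₀`. Hence `E_{α,α} > 0` on the negative half-line, and convolving with beta densities spreads
this to the Prabhakar functions: `E^m_{α,p}(-x) ≥ 0` for `p ≥ mα`.

In `E^{m+1}_{α,p-α}(-x) = E^m_{α,p-α}(-x) - x E^{m+1}_{α,p}(-x)` positivity then makes the last term
smaller than the middle one, so by induction `x^m E^m_{α,p}(-x)` is bounded for `p ≥ (m+1)α`. The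
contiguity relation `E^m_{α,p}(z) = p E^m_{α,p+1}(z) + αm z E^{m+1}_{α,p+1+α}(z)` lowers `p` in unit
steps to an arbitrary real number. The case `m = 1`, together with
`E_{α,β}(-x) = 1/Γ(β) - x E_{α,β+α}(-x)`, is the claim.
-/

open MeasureTheory Asymptotics Topology
open Finset.HasAntidiagonal (antidiagonal mem_antidiagonal)

section Gamma

lemma inv_Gamma_eq_mul_inv_Gamma_add_one (s : ℝ) :
    (Real.Gamma s)⁻¹ = s * (Real.Gamma (s + 1))⁻¹ := by
  rcases eq_or_ne s 0 with rfl | hs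
  · simp [Real.Gamma_zero]
  · rw [Real.Gamma_add_one hs, mul_inv, mul_inv_cancel_left₀ hs]

lemma rpow_mul_exp_neg_le_Gamma {s R : ℝ} (hs : 1 ≤ s) (hR : 0 < R) :
    R ^ (s - 1) * Real.exp (-R) ≤ Real.Gamma s := by
  have hs0 : 0 < s := by linarith
  have hintegrable := Real.GammaIntegral_convergent hs0
  calc R ^ (s - 1) * Real.exp (-R)
      = ∫ x in Ioi R, Real.exp (-x) * R ^ (s - 1) := by
        rw [integral_mul_const, integral_exp_neg_Ioi, mul_comm]
    _ ≤ ∫ x in Ioi R, Real.exp (-x) * x ^ (s - 1) := by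
        refine setIntegral_mono_on ((integrableOn_exp_neg_Ioi R).mul_const _)
          (hintegrable.mono_set (Ioi_subset_Ioi hR.le)) measurableSet_Ioi fun x (hx : R < x) => ?_
        gcongr
    _ ≤ ∫ x in Ioi 0, Real.exp (-x) * x ^ (s - 1) := by
        refine setIntegral_mono_set hintegrable ?_ (Ioi_subset_Ioi hR.le).eventuallyLE
        filter_upwards [ae_restrict_mem measurableSet_Ioi] with x (hx : 0 < x)
        rw [Pi.zero_apply]
        positivity
    _ = Real.Gamma s := (Real.Gamma_eq_integral hs0).symm

lemma inv_Gamma_le {s R : ℝ} (hs : 1 ≤ s) (hR : 0 < R) :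
    (Real.Gamma s)⁻¹ ≤ Real.exp R * R ^ (1 - s) := by
  calc (Real.Gamma s)⁻¹ ≤ (R ^ (s - 1) * Real.exp (-R))⁻¹ := by
        gcongr
        exact rpow_mul_exp_neg_le_Gamma hs hR
    _ = Real.exp R * R ^ (1 - s) := by
        rw [mul_inv, ← Real.exp_neg, neg_neg, ← Real.rpow_neg hR.le, neg_sub, mul_comm]

lemma summable_pow_div_Gamma {α : ℝ} (hα : 0 < α) (β z : ℝ) :
    Summable fun k : ℕ => z ^ k / Real.Gamma (α * k + β) := by
  set R : ℝ := (|z| + 1) ^ α⁻¹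
  have hR0 : 0 < R := by positivity
  have hRα : R ^ α = |z| + 1 := Real.rpow_inv_rpow (by positivity) hα.ne'
  have hratio : |z| / R ^ α < 1 := by
    rw [hRα, div_lt_one (by positivity)]
    exact lt_add_one _
  refine Summable.of_norm_bounded_eventually_nat
    ((summable_geometric_of_lt_one (by positivity) hratio).mul_left
      (Real.exp R * R ^ (1 - β))) ?_
  have hlarge : ∀ᶠ k : ℕ in atTop, 1 ≤ α * k + β :=
    (tendsto_atTop_add_const_right _ _
      (tendsto_natCast_atTop_atTop.const_mul_atTop hα)).eventually_ge_atTop 1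
  filter_upwards [hlarge] with k hk
  have hG : 0 < Real.Gamma (α * k + β) := Real.Gamma_pos_of_pos (by linarith)
  calc ‖z ^ k / Real.Gamma (α * k + β)‖
      = |z| ^ k * (Real.Gamma (α * k + β))⁻¹ := by
        rw [norm_div, norm_pow, Real.norm_eq_abs, Real.norm_of_nonneg hG.le, div_eq_mul_inv]
    _ ≤ |z| ^ k * (Real.exp R * R ^ (1 - (α * k + β))) := by
        gcongr
        exact inv_Gamma_le hk hR0
    _ = Real.exp R * R ^ (1 - β) * (|z| / R ^ α) ^ k := by
        rw [show 1 - (α * k + β) = (1 - β) - α * k by ring, Real.rpow_sub hR0,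
          Real.rpow_mul_natCast hR0.le, div_pow]
        ring

end Gamma

section Beta

lemma ofReal_rpow_mul_rpow_eqOn (p q : ℝ) :
    EqOn (fun s : ℝ => (s : ℂ) ^ ((p : ℂ) - 1) * (1 - (s : ℂ)) ^ ((q : ℂ) - 1))
      (fun s : ℝ => ((s ^ (p - 1) * (1 - s) ^ (q - 1) : ℝ) : ℂ)) (Ioo 0 1) := by
  intro s hs
  have hs' : 0 ≤ 1 - s := sub_nonneg.2 hs.2.le
  simp only [Complex.ofReal_mul, Complex.ofReal_cpow hs.1.le, Complex.ofReal_cpow hs',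
    Complex.ofReal_sub, Complex.ofReal_one]

variable {p q : ℝ}

lemma integrableOn_rpow_mul_one_sub_rpow (hp : 0 < p) (hq : 0 < q) :
    IntegrableOn (fun s : ℝ => s ^ (p - 1) * (1 - s) ^ (q - 1)) (Ioo 0 1) := by
  have hc := Complex.betaIntegral_convergent (u := p) (v := q) (by simpa) (by simpa)
  rw [intervalIntegrable_iff_integrableOn_Ioo_of_le zero_le_one] at hc
  simpa [IntegrableOn] using
    (hc.congr_fun (ofReal_rpow_mul_rpow_eqOn p q) measurableSet_Ioo).re

lemma integral_rpow_mul_one_sub_rpow (hp : 0 < p) (hq : 0 < q) :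
    ∫ s in Ioo (0 : ℝ) 1, s ^ (p - 1) * (1 - s) ^ (q - 1) =
      Real.Gamma p * Real.Gamma q / Real.Gamma (p + q) := by
  rw [← ProbabilityTheory.beta, ProbabilityTheory.beta_eq_betaIntegralReal p q hp hq,
    Complex.betaIntegral, intervalIntegral.integral_of_le zero_le_one,
    integral_Ioc_eq_integral_Ioo,
    setIntegral_congr_fun measurableSet_Ioo (ofReal_rpow_mul_rpow_eqOn p q),
    integral_complex_ofReal, Complex.ofReal_re]

end Beta

section Multichoose

lemma coeff_mk_one_pow_eq_multichoose (m k : ℕ) :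
    PowerSeries.coeff k ((PowerSeries.mk 1 : PowerSeries ℝ) ^ m) = m.multichoose k := by
  cases m with
  | zero => cases k <;> simp [PowerSeries.coeff_one]
  | succ m =>
    rw [PowerSeries.mk_one_pow_eq_mk_choose_add, PowerSeries.coeff_mk, Nat.multichoose_eq,
      Nat.choose_symm_add, add_right_comm, Nat.add_sub_cancel]

lemma sum_antidiagonal_multichoose_mul (m n k : ℕ) (w : ℕ → ℝ) :
    ∑ ij ∈ antidiagonal k, m.multichoose ij.1 * n.multichoose ij.2 * w (ij.1 + ij.2) =
      (m + n).multichoose k * w k := by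
  rw [← coeff_mk_one_pow_eq_multichoose, pow_add, PowerSeries.coeff_mul, Finset.sum_mul]
  exact Finset.sum_congr rfl fun ij hij => by
    simp only [coeff_mk_one_pow_eq_multichoose, mem_antidiagonal.1 hij]

lemma hasSum_multichoose_mul_multichoose {m n : ℕ} {w : ℕ → ℝ}
    (hw : Summable fun k => (m + n).multichoose k * ‖w k‖) :
    HasSum (fun ij : ℕ × ℕ => m.multichoose ij.1 * n.multichoose ij.2 * w (ij.1 + ij.2))
      (∑' k, (m + n).multichoose k * w k) := by
  have hw' : Summable fun k => (m + n).multichoose k * w k :=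
    .of_norm <| hw.congr fun k => by rw [norm_mul, Real.norm_natCast]
  rw [← Finset.HasAntidiagonal.sigmaAntidiagonalEquivProd.hasSum_iff]
  refine hw'.hasSum.sigma_of_hasSum (fun k => ?_) ?_
  · rw [← sum_antidiagonal_multichoose_mul, ← Finset.sum_coe_sort]
    exact hasSum_fintype _
  · refine .of_norm <| (summable_sigma_of_nonneg fun _ => norm_nonneg _).2
      ⟨fun k => (hasSum_fintype _).summable, hw.congr fun k => ?_⟩
    rw [tsum_fintype, ← sum_antidiagonal_multichoose_mul m n k fun i => ‖w i‖,
      ← Finset.sum_coe_sort]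
    simp [norm_mul]

lemma succ_mul_multichoose_succ (m k : ℕ) :
    (k + 1) * m.multichoose (k + 1) = m * (m + 1).multichoose k := by
  have h := Nat.choose_succ_right_eq (m + k) k
  rw [Nat.add_sub_cancel] at h
  simp only [Nat.multichoose_eq, ← add_assoc, Nat.add_sub_cancel, add_right_comm m 1 k]
  linarith

lemma multichoose_le_two_pow (m k : ℕ) : m.multichoose k ≤ 2 ^ (m + k) := by
  rw [Nat.multichoose_eq]
  exact (Nat.choose_le_two_pow _ _).trans (Nat.pow_le_pow_right two_pos (Nat.sub_le _ _))

end Multichoose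

/-- The three-parameter Mittag-Leffler (Prabhakar) function
`E^m_{α,β}(z) = ∑_{k≥0} (m)_k/k! · z^k/Γ(αk+β)` for a natural number `m`, where `m.multichoose k` is
the quotient `(m)_k/k!` with `(m)_k` the rising factorial. It equals `1/Γ(β)` for `m = 0` and
`E_{α,β}` for `m = 1`. As `Real.Gamma` is `0` at its poles, its inverse there is the true value `0`
of the entire function `1/Γ`. -/
noncomputable def prabhakar (α : ℝ) (m : ℕ) (β z : ℝ) : ℝ :=
  ∑' k : ℕ, m.multichoose k * (z ^ k / Real.Gamma (α * k + β))

lemma ml_eq_prabhakar_one (α β z : ℝ) : ml α β z = prabhakar α 1 β z := by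
  simp only [ml, prabhakar, Nat.multichoose_one, Nat.cast_one, one_mul]

lemma prabhakar_zero (α β z : ℝ) : prabhakar α 0 β z = (Real.Gamma β)⁻¹ := by
  rw [prabhakar, tsum_eq_single 0 fun k hk => ?_]
  · simp
  · obtain ⟨k, rfl⟩ := Nat.exists_eq_succ_of_ne_zero hk
    simp

section Prabhakar

variable {α : ℝ}

lemma summable_prabhakar_norm (hα : 0 < α) (m : ℕ) (β z : ℝ) :
    Summable fun k : ℕ => m.multichoose k * ‖z ^ k / Real.Gamma (α * k + β)‖ := by
  refine .of_nonneg_of_le (fun k => by positivity) (fun k => ?_)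
    ((summable_pow_div_Gamma hα β (2 * z)).norm.mul_left (2 ^ m))
  have hm : (m.multichoose k : ℝ) ≤ 2 ^ (m + k) := mod_cast multichoose_le_two_pow m k
  calc m.multichoose k * ‖z ^ k / Real.Gamma (α * k + β)‖
      ≤ 2 ^ (m + k) * ‖z ^ k / Real.Gamma (α * k + β)‖ := by gcongr
    _ = 2 ^ m * ‖(2 * z) ^ k / Real.Gamma (α * k + β)‖ := by
        rw [mul_pow, mul_div_assoc, norm_mul, norm_pow, Real.norm_ofNat, pow_add, mul_assoc]

lemma hasSum_prabhakar (hα : 0 < α) (m : ℕ) (β z : ℝ) :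
    HasSum (fun k : ℕ => m.multichoose k * (z ^ k / Real.Gamma (α * k + β)))
      (prabhakar α m β z) :=
  (Summable.of_norm <| (summable_prabhakar_norm hα m β z).congr fun k => by
    rw [norm_mul, Real.norm_natCast]).hasSum

lemma continuous_prabhakar (hα : 0 < α) (m : ℕ) (β : ℝ) : Continuous (prabhakar α m β) := by
  refine continuous_iff_continuousAt.2 fun x => ?_
  have hball : ContinuousOn (prabhakar α m β) (Metric.ball 0 (|x| + 1)) := by
    refine continuousOn_tsum (fun k => by fun_prop)
      (summable_prabhakar_norm hα m β (|x| + 1)) fun k y hy => ?_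
    have hy' : |y| ≤ |(|x| + 1)| := (mem_ball_zero_iff.1 hy).le.trans (le_abs_self _)
    simp only [norm_mul, norm_div, norm_pow, Real.norm_eq_abs, Nat.abs_cast]
    gcongr
  exact hball.continuousAt (Metric.isOpen_ball.mem_nhds (by simp))

lemma hasSum_prabhakar_sub_inv_Gamma (hα : 0 < α) (m : ℕ) (β z : ℝ) :
    HasSum (fun k : ℕ => m.multichoose (k + 1) * (z ^ (k + 1) / Real.Gamma (α * k + (β + α))))
      (prabhakar α m β z - (Real.Gamma β)⁻¹) := by
  have h := (hasSum_nat_add_iff' 1).2 (hasSum_prabhakar hα m β z)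
  simp only [Finset.sum_range_one, Nat.multichoose_zero_right, pow_zero, Nat.cast_zero, mul_zero,
    zero_add, Nat.cast_one, one_mul, one_div] at h
  refine h.congr_fun fun k => ?_
  rw [Nat.cast_succ, mul_add, mul_one, add_assoc, add_comm α]

lemma prabhakar_succ (hα : 0 < α) (m : ℕ) (β z : ℝ) :
    prabhakar α (m + 1) β z = prabhakar α m β z + z * prabhakar α (m + 1) (β + α) z := by
  have h := (hasSum_prabhakar_sub_inv_Gamma hα m β z).add
    ((hasSum_prabhakar hα (m + 1) (β + α) z).mul_left z)
  have h' := (hasSum_prabhakar_sub_inv_Gamma hα (m + 1) β z).unique <| h.congr_fun fun k => by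
    rw [Nat.multichoose_succ_succ]
    push_cast
    ring
  linarith

lemma hasSum_index_mul_prabhakar (hα : 0 < α) (m : ℕ) (β z : ℝ) :
    HasSum (fun k : ℕ => k * (m.multichoose k * (z ^ k / Real.Gamma (α * k + β))))
      (m * (z * prabhakar α (m + 1) (β + α) z)) := by
  rw [← hasSum_nat_add_iff' 1, Finset.sum_range_one, Nat.cast_zero, zero_mul, sub_zero]
  refine (((hasSum_prabhakar hα (m + 1) (β + α) z).mul_left z).mul_left (m : ℝ)).congr_fun
    fun k => ?_
  have hm : ((k + 1 : ℕ) : ℝ) * m.multichoose (k + 1) = m * (m + 1).multichoose k :=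
    mod_cast succ_mul_multichoose_succ m k
  have hΓ : α * ((k + 1 : ℕ) : ℝ) + β = α * k + (β + α) := by push_cast; ring
  rw [hΓ, ← mul_assoc, hm]
  ring

lemma prabhakar_eq_add_one (hα : 0 < α) (m : ℕ) (β z : ℝ) :
    prabhakar α m β z =
      β * prabhakar α m (β + 1) z + α * m * (z * prabhakar α (m + 1) (β + 1 + α) z) := by
  have h := ((hasSum_prabhakar hα m (β + 1) z).mul_left β).add
    ((hasSum_index_mul_prabhakar hα m (β + 1) z).mul_left α)
  rw [mul_assoc α]
  refine (hasSum_prabhakar hα m β z).unique <| h.congr_fun fun k => ?_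
  simp only [div_eq_mul_inv, inv_Gamma_eq_mul_inv_Gamma_add_one (α * k + β), add_assoc]
  ring

end Prabhakar

section Convolution

variable {α p q : ℝ}

/-- The `(i, j)` term of the double series obtained by multiplying out
`s^(p-1) (1-s)^(q-1) E^m_{α,p}(z s^α) E^n_{α,q}(z (1-s)^α)`. -/
noncomputable def convTerm (α : ℝ) (m n : ℕ) (p q z : ℝ) (ij : ℕ × ℕ) (s : ℝ) : ℝ :=
  s ^ (p - 1) * (1 - s) ^ (q - 1) *
    (m.multichoose ij.1 * ((z * s ^ α) ^ ij.1 / Real.Gamma (α * ij.1 + p)) *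
      (n.multichoose ij.2 * ((z * (1 - s) ^ α) ^ ij.2 / Real.Gamma (α * ij.2 + q))))

lemma convTerm_eqOn (α : ℝ) (m n : ℕ) (p q z : ℝ) (ij : ℕ × ℕ) :
    EqOn (convTerm α m n p q z ij)
      (fun s => m.multichoose ij.1 * n.multichoose ij.2 * (z ^ (ij.1 + ij.2) /
        (Real.Gamma (α * ij.1 + p) * Real.Gamma (α * ij.2 + q))) *
        (s ^ (α * ij.1 + p - 1) * (1 - s) ^ (α * ij.2 + q - 1))) (Ioo 0 1) := by
  intro s hs
  have hs' : 0 < 1 - s := sub_pos.2 hs.2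
  simp only [convTerm, add_sub_assoc, Real.rpow_add hs.1, Real.rpow_add hs',
    Real.rpow_mul_natCast hs.1.le, Real.rpow_mul_natCast hs'.le, mul_pow, pow_add]
  ring

lemma norm_convTerm_eqOn (hα : 0 < α) (m n : ℕ) (hp : 0 < p) (hq : 0 < q) (z : ℝ) (ij : ℕ × ℕ) :
    EqOn (fun s => ‖convTerm α m n p q z ij s‖) (convTerm α m n p q |z| ij) (Ioo 0 1) := by
  intro s hs
  have hs' : 0 < 1 - s := sub_pos.2 hs.2
  have hΓp : 0 < Real.Gamma (α * ij.1 + p) := Real.Gamma_pos_of_pos (by positivity)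
  have hΓq : 0 < Real.Gamma (α * ij.2 + q) := Real.Gamma_pos_of_pos (by positivity)
  simp only [convTerm, norm_mul, norm_div, norm_pow, Real.norm_eq_abs, Nat.abs_cast,
    abs_of_pos hΓp, abs_of_pos hΓq, abs_of_pos (Real.rpow_pos_of_pos hs.1 _),
    abs_of_pos (Real.rpow_pos_of_pos hs' _)]

lemma integrableOn_convTerm (hα : 0 < α) (m n : ℕ) (hp : 0 < p) (hq : 0 < q) (z : ℝ)
    (ij : ℕ × ℕ) : IntegrableOn (convTerm α m n p q z ij) (Ioo 0 1) :=
  IntegrableOn.congr_fun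
    ((integrableOn_rpow_mul_one_sub_rpow (by positivity) (by positivity)).const_mul _)
    (convTerm_eqOn α m n p q z ij).symm measurableSet_Ioo

lemma integral_convTerm (hα : 0 < α) (m n : ℕ) (hp : 0 < p) (hq : 0 < q) (z : ℝ) (ij : ℕ × ℕ) :
    ∫ s in Ioo 0 1, convTerm α m n p q z ij s =
      m.multichoose ij.1 * n.multichoose ij.2 *
        (z ^ (ij.1 + ij.2) / Real.Gamma (α * (ij.1 + ij.2 : ℕ) + (p + q))) := by
  have hΓp : Real.Gamma (α * ij.1 + p) ≠ 0 := (Real.Gamma_pos_of_pos (by positivity)).ne'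
  have hΓq : Real.Gamma (α * ij.2 + q) ≠ 0 := (Real.Gamma_pos_of_pos (by positivity)).ne'
  rw [setIntegral_congr_fun measurableSet_Ioo (convTerm_eqOn α m n p q z ij), integral_const_mul,
    integral_rpow_mul_one_sub_rpow (by positivity) (by positivity),
    show α * ij.1 + p + (α * ij.2 + q) = α * (ij.1 + ij.2 : ℕ) + (p + q) by push_cast; ring]
  field_simp

lemma hasSum_integral_convTerm (hα : 0 < α) (m n : ℕ) (hp : 0 < p) (hq : 0 < q) (z : ℝ) :
    HasSum (fun ij => ∫ s in Ioo 0 1, convTerm α m n p q z ij s)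
      (prabhakar α (m + n) (p + q) z) := by
  simp only [integral_convTerm hα m n hp hq]
  exact hasSum_multichoose_mul_multichoose
    (w := fun k => z ^ k / Real.Gamma (α * k + (p + q))) (summable_prabhakar_norm hα _ _ z)

lemma tsum_convTerm (hα : 0 < α) (m n : ℕ) (p q z s : ℝ) :
    ∑' ij, convTerm α m n p q z ij s = s ^ (p - 1) * (1 - s) ^ (q - 1) *
      (prabhakar α m p (z * s ^ α) * prabhakar α n q (z * (1 - s) ^ α)) := by
  simp only [convTerm, tsum_mul_left]
  rw [prabhakar, prabhakar, tsum_mul_tsum_of_summable_norm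
    (hasSum_prabhakar hα m p _).summable.norm (hasSum_prabhakar hα n q _).summable.norm]

lemma integral_prabhakar_mul_prabhakar (hα : 0 < α) (m n : ℕ) (hp : 0 < p) (hq : 0 < q) (z : ℝ) :
    ∫ s in Ioo (0 : ℝ) 1, s ^ (p - 1) * (1 - s) ^ (q - 1) *
        (prabhakar α m p (z * s ^ α) * prabhakar α n q (z * (1 - s) ^ α)) =
      prabhakar α (m + n) (p + q) z := by
  have hnorm : Summable fun ij => ∫ s in Ioo 0 1, ‖convTerm α m n p q z ij s‖ := by
    simp only [setIntegral_congr_fun measurableSet_Ioo (norm_convTerm_eqOn hα m n hp hq z _)]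
    exact (hasSum_integral_convTerm hα m n hp hq |z|).summable
  simp only [← tsum_convTerm hα m n p q z]
  exact (hasSum_integral_of_summable_integral_norm
    (integrableOn_convTerm hα m n hp hq z) hnorm).unique (hasSum_integral_convTerm hα m n hp hq z)

end Convolution

section Volterra

variable {K : ℝ → ℝ → ℝ} {f g : ℝ → ℝ} {c : ℝ}

lemma exists_first_nonpos (hg : Continuous g) (hg0 : 0 < g 0) {T : ℝ} (hT : 0 ≤ T)
    (hgT : g T ≤ 0) : ∃ t, 0 < t ∧ g t ≤ 0 ∧ ∀ s, 0 ≤ s → s < t → 0 < g s := by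
  have hcomp : IsCompact (Icc 0 T ∩ {t | g t ≤ 0}) :=
    isCompact_Icc.inter_right (isClosed_le hg continuous_const)
  obtain ⟨t, ⟨htT, hgt⟩, hmin⟩ := hcomp.exists_isLeast ⟨T, ⟨hT, le_rfl⟩, hgT⟩
  refine ⟨t, htT.1.lt_of_ne ?_, hgt, fun s hs hst => ?_⟩
  · rintro rfl
    exact hgt.not_gt hg0
  · by_contra! hgs
    exact hst.not_ge (hmin ⟨⟨hs, hst.le.trans htT.2⟩, hgs⟩)

lemma integral_mul_le_integral_mul_of_le {k k' : ℝ → ℝ} {a b : ℝ} (hab : a ≤ b)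
    (hg : Continuous g) (hk : IntervalIntegrable k volume a b)
    (hk' : IntervalIntegrable k' volume a b) (hkk' : ∀ s ∈ Ioo a b, k s ≤ k' s)
    (hg0 : ∀ s ∈ Ioo a b, 0 ≤ g s) : ∫ s in a..b, k s * g s ≤ ∫ s in a..b, k' s * g s :=
  intervalIntegral.integral_mono_on_of_le_Ioo hab (hk.mul_continuousOn hg.continuousOn)
    (hk'.mul_continuousOn hg.continuousOn)
    fun s hs => mul_le_mul_of_nonneg_right (hkk' s hs) (hg0 s hs)

lemma integral_mul_le_integral_mul_const {k : ℝ → ℝ} {a b C : ℝ} (hab : a ≤ b)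
    (hg : Continuous g) (hk : IntervalIntegrable k volume a b) (hk0 : ∀ s ∈ Ioo a b, 0 ≤ k s)
    (hgC : ∀ s ∈ Ioo a b, g s ≤ C) : ∫ s in a..b, k s * g s ≤ (∫ s in a..b, k s) * C := by
  rw [← intervalIntegral.integral_mul_const]
  exact intervalIntegral.integral_mono_on_of_le_Ioo hab (hk.mul_continuousOn hg.continuousOn)
    (hk.mul_const _) fun s hs => mul_le_mul_of_nonneg_left (hgC s hs) (hk0 s hs)

lemma le_integral_kernel_of_first_nonpos (hg : Continuous g) (hf : MonotoneOn f (Ioi 0))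
    (hKnonneg : ∀ t s, 0 < s → s < t → 0 ≤ K t s)
    (hKanti : ∀ s, 0 < s → AntitoneOn (K · s) (Ioi s))
    (hKint : ∀ t, 0 < t → IntervalIntegrable (K t) volume 0 t)
    (heq : ∀ t, 0 < t → c * g t + ∫ s in 0..t, K t s * g s = f t)
    (hc : 0 < c) {t₀ t₁ : ℝ} (hgt₀ : g t₀ ≤ 0) (hpos : ∀ s, 0 ≤ s → s < t₀ → 0 < g s)
    (ht₁ : 0 < t₁) (ht₁₀ : t₁ < t₀) : c ≤ ∫ s in t₁..t₀, K t₀ s := by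
  obtain ⟨t, ht, hmax⟩ :=
    isCompact_Icc.exists_isMaxOn (nonempty_Icc.2 ht₁₀.le) hg.continuousOn
  have hgt : 0 < g t := (hpos t₁ ht₁.le ht₁₀).trans_le (hmax ⟨le_rfl, ht₁₀.le⟩)
  have htt₀ : t < t₀ := ht.2.lt_of_ne (by rintro rfl; exact hgt₀.not_gt hgt)
  have ht0 : 0 < t := ht₁.trans_le ht.1
  have ht₀ : 0 < t₀ := ht₁.trans ht₁₀
  have hKsub : ∀ a b, 0 ≤ a → a ≤ b → b ≤ t₀ → IntervalIntegrable (K t₀) volume a b :=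
    fun a b ha hab hb => (hKint t₀ ht₀).mono_set <| by
      rw [uIcc_of_le hab, uIcc_of_le ht₀.le]
      exact Icc_subset_Icc ha hb
  have hK0t := hKsub 0 t le_rfl ht0.le htt₀.le
  have hKtt₀ := hKsub t t₀ ht0.le htt₀.le le_rfl
  have hpast : ∫ s in 0..t, K t₀ s * g s ≤ ∫ s in 0..t, K t s * g s :=
    integral_mul_le_integral_mul_of_le ht0.le hg hK0t (hKint t ht0)
      (fun s hs => hKanti s hs.1 hs.2 (hs.2.trans htt₀) htt₀.le)
      fun s hs => (hpos s hs.1.le (hs.2.trans htt₀)).le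
  have hrecent : ∫ s in t..t₀, K t₀ s * g s ≤ (∫ s in t..t₀, K t₀ s) * g t :=
    integral_mul_le_integral_mul_const htt₀.le hg hKtt₀
      (fun s hs => hKnonneg t₀ s (ht0.trans hs.1) hs.2)
      fun s hs => hmax ⟨ht.1.trans hs.1.le, hs.2.le⟩
  have hmass : ∫ s in t..t₀, K t₀ s ≤ ∫ s in t₁..t₀, K t₀ s := by
    rw [← intervalIntegral.integral_add_adjacent_intervals
      (hKsub t₁ t ht₁.le ht.1 htt₀.le) hKtt₀]
    exact le_add_of_nonneg_left <| intervalIntegral.integral_nonneg ht.1 fun s hs =>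
      hKnonneg t₀ s (ht₁.trans_le hs.1) (hs.2.trans_lt htt₀)
  have hsplit := intervalIntegral.integral_add_adjacent_intervals
    (hK0t.mul_continuousOn hg.continuousOn) (hKtt₀.mul_continuousOn hg.continuousOn)
  have hcg : c * g t ≤ (∫ s in t..t₀, K t₀ s) * g t := by
    linarith [heq t ht0, heq t₀ ht₀, hf ht0 ht₀ htt₀.le,
      mul_nonpos_of_nonneg_of_nonpos hc.le hgt₀]
  exact (le_of_mul_le_mul_right hcg hgt).trans hmass

lemma pos_of_volterra_eq (hg : Continuous g) (hf : MonotoneOn f (Ioi 0))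
    (hKnonneg : ∀ t s, 0 < s → s < t → 0 ≤ K t s)
    (hKanti : ∀ s, 0 < s → AntitoneOn (K · s) (Ioi s))
    (hKint : ∀ t, 0 < t → IntervalIntegrable (K t) volume 0 t)
    (heq : ∀ t, 0 < t → c * g t + ∫ s in 0..t, K t s * g s = f t)
    (hc : 0 < c) (hg0 : 0 < g 0) {T : ℝ} (hT : 0 ≤ T) : 0 < g T := by
  by_contra! hgT
  obtain ⟨t₀, ht₀, hgt₀, hpos⟩ := exists_first_nonpos hg hg0 hT hgT
  have hlim : Tendsto (fun t => ∫ s in t..t₀, K t₀ s) (𝓝[<] t₀) (𝓝 0) := by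
    have hintegrable := hKint t₀ ht₀
    rw [intervalIntegrable_iff'] at hintegrable
    have hcont := intervalIntegral.continuousOn_primitive_interval_left hintegrable
    rw [uIcc_of_le ht₀.le] at hcont
    have h := (hcont t₀ (right_mem_Icc.2 ht₀.le)).tendsto
    rw [intervalIntegral.integral_same] at h
    exact h.mono_left (nhdsWithin_le_of_mem (Icc_mem_nhdsLT ht₀))
  refine hc.not_ge (ge_of_tendsto hlim ?_)
  filter_upwards [Ioo_mem_nhdsLT ht₀] with t₁ ht₁
  exact le_integral_kernel_of_first_nonpos hg hf hKnonneg hKanti hKint heq hc hgt₀ hpos ht₁.1 ht₁.2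

end Volterra

section Positivity

variable {α : ℝ}

/-- The kernel of the Volterra equation satisfied by `t ↦ E_{α,α}(-t^α)`. -/
noncomputable def mlKernel (α t s : ℝ) : ℝ := s ^ (α - 1) * (1 - s / t) ^ (α - 1)

lemma mlKernel_nonneg (α : ℝ) {t s : ℝ} (hs : 0 < s) (hst : s < t) : 0 ≤ mlKernel α t s := by
  have h : 0 < 1 - s / t := sub_pos.2 ((div_lt_one (hs.trans hst)).2 hst)
  unfold mlKernel
  positivity

lemma antitoneOn_mlKernel (hα1 : α ≤ 1) {s : ℝ} (hs : 0 < s) :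
    AntitoneOn (mlKernel α · s) (Ioi s) := by
  intro t (ht : s < t) t' _ htt'
  have h : 0 < 1 - s / t := sub_pos.2 ((div_lt_one (hs.trans ht)).2 ht)
  have ht0 : 0 < t := hs.trans ht
  refine mul_le_mul_of_nonneg_left ?_ (by positivity)
  exact Real.rpow_le_rpow_of_nonpos h (by gcongr) (by linarith)

lemma mlKernel_mul_left (α : ℝ) {t u : ℝ} (ht : 0 < t) (hu : 0 ≤ u) :
    mlKernel α t (t * u) = t ^ (α - 1) * (u ^ (α - 1) * (1 - u) ^ (α - 1)) := by
  rw [mlKernel, Real.mul_rpow ht.le hu, mul_div_cancel_left₀ _ ht.ne', mul_assoc]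

lemma intervalIntegrable_mlKernel (hα : 0 < α) {t : ℝ} (ht : 0 < t) :
    IntervalIntegrable (mlKernel α t) volume 0 t := by
  have hunit : IntervalIntegrable (fun u => mlKernel α t (t * u)) volume 0 1 := by
    rw [intervalIntegrable_iff_integrableOn_Ioo_of_le zero_le_one]
    exact IntegrableOn.congr_fun ((integrableOn_rpow_mul_one_sub_rpow hα hα).const_mul _)
      (fun u hu => (mlKernel_mul_left α ht hu.1.le).symm) measurableSet_Ioo
  simpa [mul_inv_cancel_left₀ ht.ne'] using hunit.comp_mul_left (c := t⁻¹)

lemma prabhakar_one_volterra (hα : 0 < α) {t : ℝ} (ht : 0 < t) :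
    Real.Gamma α * prabhakar α 1 α (-t ^ α) +
      ∫ s in 0..t, mlKernel α t s * prabhakar α 1 α (-s ^ α) = 1 := by
  have hΓ : Real.Gamma α ≠ 0 := (Real.Gamma_pos_of_pos hα).ne'
  have hconv := integral_prabhakar_mul_prabhakar hα 1 0 hα hα (-t ^ α)
  have hrec := prabhakar_succ hα 0 α (-t ^ α)
  simp only [prabhakar_zero, zero_add] at hconv hrec
  have hintegral : ∫ s in 0..t, mlKernel α t s * prabhakar α 1 α (-s ^ α) =
      t ^ α * (Real.Gamma α * prabhakar α 1 (α + α) (-t ^ α)) := by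
    have hsubst := intervalIntegral.mul_integral_comp_mul_left
      (f := fun s => mlKernel α t s * prabhakar α 1 α (-s ^ α)) (a := 0) (b := 1) (c := t)
    rw [mul_zero, mul_one] at hsubst
    rw [← hsubst, intervalIntegral.integral_of_le zero_le_one, integral_Ioc_eq_integral_Ioo,
      ← hconv, ← integral_const_mul, ← integral_const_mul, ← integral_const_mul]
    refine setIntegral_congr_fun measurableSet_Ioo fun u hu => ?_
    have htα : t ^ α = t * t ^ (α - 1) := by rw [Real.rpow_sub_one ht.ne']; field_simp
    simp only [mlKernel_mul_left α ht hu.1.le, Real.mul_rpow ht.le hu.1.le, neg_mul]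
    rw [htα]
    field_simp
  rw [hintegral, hrec]
  field_simp
  ring

lemma prabhakar_one_self_pos (hα : 0 < α) (hα1 : α ≤ 1) {x : ℝ} (hx : 0 ≤ x) :
    0 < prabhakar α 1 α (-x) := by
  have hcont : Continuous fun t : ℝ => prabhakar α 1 α (-t ^ α) :=
    (continuous_prabhakar hα 1 α).comp (Real.continuous_rpow_const hα.le).neg
  have hΓ : 0 < Real.Gamma α := Real.Gamma_pos_of_pos hα
  have hzero : 0 < prabhakar α 1 α (-(0 : ℝ) ^ α) := by
    rw [Real.zero_rpow hα.ne', neg_zero, prabhakar_succ hα, prabhakar_zero, zero_mul, add_zero]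
    positivity
  have h := pos_of_volterra_eq hcont (monotoneOn_const (c := 1)) (fun t s => mlKernel_nonneg α)
    (fun s => antitoneOn_mlKernel hα1) (fun t => intervalIntegrable_mlKernel hα)
    (fun t => prabhakar_one_volterra hα) hΓ hzero (T := x ^ α⁻¹) (by positivity)
  rwa [Real.rpow_inv_rpow hx hα.ne'] at h

lemma prabhakar_nonneg (hα : 0 < α) (hα1 : α ≤ 1) (m : ℕ) :
    ∀ p, 0 < p → m * α ≤ p → ∀ x, 0 ≤ x → 0 ≤ prabhakar α m p (-x) := by
  induction m with
  | zero =>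
    intro p hp _ x _
    rw [prabhakar_zero]
    exact inv_nonneg.2 (Real.Gamma_pos_of_pos hp).le
  | succ m ih =>
    intro p hp hmp x hx
    push_cast at hmp
    have hαp : α ≤ p := by nlinarith [m.cast_nonneg (α := ℝ)]
    rcases hαp.eq_or_lt with rfl | hlt
    · have hmα : m * α ≤ 0 := by linarith
      obtain rfl : m = 0 := by
        exact_mod_cast (nonpos_of_mul_nonpos_left hmα hα).antisymm m.cast_nonneg
      exact (prabhakar_one_self_pos hα hα1 hx).le
    · have hconv := integral_prabhakar_mul_prabhakar hα 1 m hα (sub_pos.2 hlt) (-x)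
      rw [add_sub_cancel, add_comm] at hconv
      rw [← hconv]
      refine setIntegral_nonneg measurableSet_Ioo fun s hs => ?_
      have hs0 : 0 < s := hs.1
      have hs1 : 0 < 1 - s := sub_pos.2 hs.2
      have h1 := prabhakar_one_self_pos hα hα1 (x := x * s ^ α) (by positivity)
      have hm := ih (p - α) (sub_pos.2 hlt) (by linarith) (x * (1 - s) ^ α) (by positivity)
      rw [neg_mul, neg_mul]
      positivity

end Positivity

section Bounds

variable {α : ℝ}

lemma pow_mul_prabhakar_isBigO_one_of_le (hα : 0 < α) (hα1 : α ≤ 1) (m : ℕ) :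
    ∀ p, (m + 1) * α ≤ p →
      (fun x => x ^ m * prabhakar α m p (-x)) =O[𝓟 (Ici 0)] (fun _ => (1 : ℝ)) := by
  induction m with
  | zero =>
    intro p _
    simp only [pow_zero, prabhakar_zero]
    exact isBigO_const_const _ one_ne_zero _
  | succ m ih =>
    intro p hp
    push_cast at hp
    refine .trans (.of_bound 1 <| eventually_principal.2 fun x (hx : 0 ≤ x) => ?_)
      (ih (p - α) (by linarith))
    have hpα : 0 < p - α := by nlinarith [m.cast_nonneg (α := ℝ)]
    have h₁ := prabhakar_nonneg hα hα1 (m + 1) p (by linarith) (by push_cast; linarith) x hx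
    have h₂ := prabhakar_nonneg hα hα1 (m + 1) (p - α) hpα (by push_cast; linarith) x hx
    have hrec := prabhakar_succ hα m (p - α) (-x)
    rw [sub_add_cancel] at hrec
    have hle : x * prabhakar α (m + 1) p (-x) ≤ prabhakar α m (p - α) (-x) := by linarith
    rw [one_mul, pow_succ, mul_assoc, norm_mul (x ^ m), norm_mul (x ^ m)]
    exact mul_le_mul_of_nonneg_left (abs_le_abs_of_nonneg (by positivity) hle) (norm_nonneg _)

lemma pow_mul_prabhakar_isBigO_one_of_le_add (hα : 0 < α) (hα1 : α ≤ 1) (N : ℕ) :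
    ∀ (m : ℕ) (p : ℝ), (m + 1) * α ≤ p + N →
      (fun x => x ^ m * prabhakar α m p (-x)) =O[𝓟 (Ici 0)] (fun _ => (1 : ℝ)) := by
  induction N with
  | zero =>
    intro m p hp
    exact pow_mul_prabhakar_isBigO_one_of_le hα hα1 m p (by simpa using hp)
  | succ N ih =>
    intro m p hp
    push_cast at hp
    have h₁ := ih m (p + 1) (by linarith)
    have h₂ := ih (m + 1) (p + 1 + α) (by push_cast; linarith)
    refine ((h₁.const_mul_left p).sub (h₂.const_mul_left (α * m))).congr_left fun x => ?_
    rw [prabhakar_eq_add_one hα m p]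
    ring

lemma pow_mul_prabhakar_isBigO_one (hα : 0 < α) (hα1 : α ≤ 1) (m : ℕ) (p : ℝ) :
    (fun x => x ^ m * prabhakar α m p (-x)) =O[𝓟 (Ici 0)] (fun _ => (1 : ℝ)) := by
  obtain ⟨N, hN⟩ := exists_nat_ge ((m + 1) * α - p)
  exact pow_mul_prabhakar_isBigO_one_of_le_add hα hα1 N m p (by linarith)

lemma one_add_mul_ml_isBigO_one (hα : 0 < α) (hα1 : α ≤ 1) (β : ℝ) :
    (fun x => (1 + x) * ml α β (-x)) =O[𝓟 (Ici 0)] (fun _ => (1 : ℝ)) := by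
  have hβ := pow_mul_prabhakar_isBigO_one hα hα1 1 β
  have hβα := pow_mul_prabhakar_isBigO_one hα hα1 1 (β + α)
  have hconst : (fun _ : ℝ => (Real.Gamma β)⁻¹) =O[𝓟 (Ici 0)] (fun _ => (1 : ℝ)) :=
    isBigO_const_const _ one_ne_zero _
  refine ((hconst.sub hβα).add hβ).congr_left fun x => ?_
  rw [ml_eq_prabhakar_one, add_mul, one_mul, pow_one, prabhakar_succ hα 0 β, prabhakar_zero]
  ring

end Bounds

theorem mittagLeffler_two_param_bound_general (α β : ℝ) (hα : 0 < α) (hα1 : α ≤ 1) :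
    ∃ M : ℝ, 0 < M ∧ ∀ x : ℝ, 0 ≤ x → |ml α β (-x)| ≤ M / (1 + x) := by
  obtain ⟨M, hM, hbound⟩ := (one_add_mul_ml_isBigO_one hα hα1 β).exists_pos
  refine ⟨M, hM, fun x hx => ?_⟩
  have hx1 : 0 < 1 + x := by positivity
  have h := eventually_principal.1 hbound.bound x hx
  rwa [norm_one, mul_one, norm_mul, Real.norm_of_nonneg hx1.le, Real.norm_eq_abs, mul_comm,
    ← le_div_iff₀ hx1] at h

/-- for `0<α<1` and `β>0` there is `M > 0` such that
`|E_{α,β}(−x)| ≤ M/(1+x)` for all `x ≥ 0`. -/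
theorem mittagLeffler_two_param_bound (α β : ℝ) (hα : 0 < α) (hα1 : α < 1) (hβ : 0 < β) :
    ∃ M : ℝ, 0 < M ∧ ∀ x : ℝ, 0 ≤ x → |ml α β (-x)| ≤ M / (1 + x) :=
  mittagLeffler_two_param_bound_general α β hα hα1.le
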